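/- arXiv:2210.10962 — 9 statements merged into one kernel-verified Lean document; each statement's English description precedes it below -/
import Mathlib

section
/- Let n ≥ 1, let C ∈ ℝ^{n×n} be symmetric, v ∈ ℝ^n, α ∈ ℝ, and suppose the (n+1)×(n+1) block matrix [[C, v], [v^⊤, α]] is positive semi-definite. Then for every σ > 0, σ² ‖(C + σ² I)^{−1} v‖₂² ≤ α − v^⊤ (C + σ² I)^{−1} v; in particular the posterior variance α − v^⊤ (C + σ² I)^{−1} v is nonnegative. -/
open Matrix BigOperators

/-!
Put `w = (C + σ²I)⁻¹ v`. The inverse is genuine because `C`, a principal block of a positive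
semi-definite matrix, is positive semi-definite, so that `C + σ²I` is positive definite.
Evaluating the quadratic form of the block matrix at `(w, -1)` gives `wᵀCw - 2 vᵀw + α ≥ 0`, and
`C w = v - σ² w` turns this into `α - vᵀw - σ²‖w‖² ≥ 0`.
-/

/-- If the augmented kernel matrix `[[C, v], [vᵀ, α]]` is positive semi-definite, then for
every noise level `σ > 0` we have `σ² ‖(C + σ²I)⁻¹ v‖² ≤ α − vᵀ (C + σ²I)⁻¹ v`; in
particular the posterior variance `α − vᵀ (C + σ²I)⁻¹ v` is nonnegative. -/
theorem stmt1 (n : ℕ) (hn : 1 ≤ n) (C : Matrix (Fin n) (Fin n) ℝ) (hC : C.IsSymm)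
    (v : Fin n → ℝ) (α : ℝ)
    (hPSD : (Matrix.fromBlocks C (Matrix.of fun i (_ : Fin 1) => v i)
      (Matrix.of fun (_ : Fin 1) j => v j)
      (Matrix.of fun (_ : Fin 1) (_ : Fin 1) => α)).PosSemidef) :
    ∀ σ : ℝ, 0 < σ →
      σ ^ 2 * (((C + σ ^ 2 • 1)⁻¹ *ᵥ v) ⬝ᵥ ((C + σ ^ 2 • 1)⁻¹ *ᵥ v))
          ≤ α - v ⬝ᵥ ((C + σ ^ 2 • 1)⁻¹ *ᵥ v) ∧
        0 ≤ α - v ⬝ᵥ ((C + σ ^ 2 • 1)⁻¹ *ᵥ v) := by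
  intro σ hσ
  have hCpsd : C.PosSemidef := hPSD.submatrix Sum.inl
  have hPD : (C + σ ^ 2 • (1 : Matrix (Fin n) (Fin n) ℝ)).PosDef :=
    Matrix.PosDef.posSemidef_add hCpsd (Matrix.PosDef.one.smul (pow_pos hσ 2))
  set w := (C + σ ^ 2 • (1 : Matrix (Fin n) (Fin n) ℝ))⁻¹ *ᵥ v with hw
  have hv : C *ᵥ w + σ ^ 2 • w = v := by
    have h : (C + σ ^ 2 • (1 : Matrix (Fin n) (Fin n) ℝ)) *ᵥ w = v := by
      rw [hw, mulVec_mulVec, mul_nonsing_inv _ ((isUnit_iff_isUnit_det _).mp hPD.isUnit),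
        one_mulVec]
    simpa [add_mulVec, smul_mulVec] using h
  have hq := hPSD.dotProduct_mulVec_nonneg (Sum.elim w fun _ => -1)
  have hq' : 0 ≤ w ⬝ᵥ (C *ᵥ w) - 2 * (v ⬝ᵥ w) + α := by
    have e : (Matrix.of fun i (_ : Fin 1) => v i) *ᵥ (fun _ => (-1 : ℝ)) = -v := by
      ext i; simp [mulVec, dotProduct]
    have e' : (Matrix.of fun (_ : Fin 1) j => v j) *ᵥ w = fun _ => v ⬝ᵥ w := by
      ext i; simp [mulVec, dotProduct]
    have e'' : (Matrix.of fun (_ : Fin 1) (_ : Fin 1) => α) *ᵥ (fun _ => (-1 : ℝ))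
        = fun _ => -α := by
      ext i; simp [mulVec, dotProduct]
    rw [fromBlocks_mulVec, star_trivial, sumElim_dotProduct_sumElim] at hq
    simp only [Sum.elim_comp_inl, Sum.elim_comp_inr, e, e', e'', dotProduct_add,
      dotProduct_neg] at hq
    have h1 : (fun _ : Fin 1 => (-1 : ℝ)) ⬝ᵥ (fun _ => v ⬝ᵥ w) = -(v ⬝ᵥ w) := by
      simp [dotProduct]
    have h2 : (fun _ : Fin 1 => (-1 : ℝ)) ⬝ᵥ (fun _ => -α) = α := by
      simp [dotProduct]
    rw [h1, h2, dotProduct_comm w v] at hq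
    linarith
  have hwv : w ⬝ᵥ (C *ᵥ w) + σ ^ 2 * (w ⬝ᵥ w) = v ⬝ᵥ w := by
    rw [dotProduct_comm v w]
    conv_rhs => rw [← hv]
    rw [dotProduct_add, dotProduct_smul, smul_eq_mul]
  have hmain : σ ^ 2 * (w ⬝ᵥ w) ≤ α - v ⬝ᵥ w := by linarith
  have hnn : 0 ≤ w ⬝ᵥ w := by simpa using dotProduct_star_self_nonneg w
  exact ⟨hmain, (mul_nonneg (sq_nonneg σ) hnn).trans hmain⟩
end

section
/- Let n ≥ 1, let C ∈ ℝ^{n×n} be symmetric, v ∈ ℝ^n, α ∈ ℝ be such that the block matrix [[C, v], [v^⊤, α]] is positive semi-definite, and let σ > 0. Let s := sqrt(α − v^⊤ (C + σ² I)^{−1} v). Then for all data vectors Y, Ỹ ∈ ℝ^n with |Y_i − Ỹ_i| ≤ ε for every i, the corresponding posterior means satisfy |v^⊤ (C + σ² I)^{−1} Y − v^⊤ (C + σ² I)^{−1} Ỹ| ≤ (ε √n / σ) · s. (This is the deterministic form of the misspecified posterior-mean bound: if the observed data differ from the surrogate data by at most ε entrywise, the posterior means computed from them differ at any point z by at most ε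 √n σ(z)/σ.) -/
open Matrix BigOperators

/-!
Put `A = C + σ² I` and `w = A⁻¹ v`. Since `A` is symmetric, the difference of the posterior means
is `w ⬝ᵥ (Y - Ytil)`, which Cauchy–Schwarz bounds by `‖w‖₂ · ε √n`. Testing positive
semi-definiteness of the block matrix against `(w, -1)` gives `wᵀ C w - 2 wᵀ v + α ≥ 0`, and
`wᵀ C w = wᵀ v - σ² ‖w‖₂²` because `A w = v`; hence `σ² ‖w‖₂² ≤ α - vᵀ A⁻¹ v`.
-/

/-- The quadratic form of the block matrix evaluated at `(w, -1)`. -/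
lemma block_quadratic_nonneg {n : ℕ} {C : Matrix (Fin n) (Fin n) ℝ} {v : Fin n → ℝ} {α : ℝ}
    (hPSD : (Matrix.fromBlocks C (Matrix.of fun i (_ : Fin 1) => v i)
      (Matrix.of fun (_ : Fin 1) j => v j)
      (Matrix.of fun (_ : Fin 1) (_ : Fin 1) => α)).PosSemidef) (w : Fin n → ℝ) :
    0 ≤ w ⬝ᵥ (C *ᵥ w) - 2 * (v ⬝ᵥ w) + α := by
  have h := hPSD.dotProduct_mulVec_nonneg (Sum.elim w fun _ => -1)
  have hcol : (Matrix.of fun i (_ : Fin 1) => v i) *ᵥ (fun _ => (-1 : ℝ)) = -v := by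
    ext i; simp [mulVec, dotProduct]
  have hrow : (Matrix.of fun (_ : Fin 1) j => v j) *ᵥ w = fun _ => v ⬝ᵥ w := by
    ext i; simp [mulVec, dotProduct]
  have hcorner : (Matrix.of fun (_ : Fin 1) (_ : Fin 1) => α) *ᵥ (fun _ => (-1 : ℝ))
      = fun _ => -α := by
    ext i; simp [mulVec, dotProduct]
  have hstar : star (Sum.elim w fun _ : Fin 1 => (-1 : ℝ)) = Sum.elim w fun _ => -1 := by
    ext i; simp
  rw [hstar, fromBlocks_mulVec, sumElim_dotProduct_sumElim] at h
  simp only [Sum.elim_comp_inl, Sum.elim_comp_inr, hcol, hrow, hcorner, dotProduct_add,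
    dotProduct_neg, dotProduct_comm w v] at h
  simp only [dotProduct, Finset.univ_unique, Finset.sum_const, Finset.card_singleton,
    one_smul] at h ⊢
  linarith

/-- Deterministic misspecified posterior-mean bound: if two data vectors differ entrywise by
at most `ε`, the corresponding posterior means differ by at most `ε √n σ(z) / σ`, where
`σ(z) = sqrt(α − vᵀ (C + σ²I)⁻¹ v)` is the posterior standard deviation. -/
theorem stmt2 (n : ℕ) (hn : 1 ≤ n) (C : Matrix (Fin n) (Fin n) ℝ) (hC : C.IsSymm)
    (v : Fin n → ℝ) (α : ℝ)
    (hPSD : (Matrix.fromBlocks C (Matrix.of fun i (_ : Fin 1) => v i)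
      (Matrix.of fun (_ : Fin 1) j => v j)
      (Matrix.of fun (_ : Fin 1) (_ : Fin 1) => α)).PosSemidef)
    (σ : ℝ) (hσ : 0 < σ) (ε : ℝ) (Y Ytil : Fin n → ℝ)
    (hY : ∀ i, |Y i - Ytil i| ≤ ε) :
    |v ⬝ᵥ ((C + σ ^ 2 • 1)⁻¹ *ᵥ Y) - v ⬝ᵥ ((C + σ ^ 2 • 1)⁻¹ *ᵥ Ytil)|
      ≤ (ε * Real.sqrt n / σ) *
        Real.sqrt (α - v ⬝ᵥ ((C + σ ^ 2 • 1)⁻¹ *ᵥ v)) := by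
  have hCpsd : C.PosSemidef := hPSD.submatrix Sum.inl
  have hApos : (C + σ ^ 2 • (1 : Matrix (Fin n) (Fin n) ℝ)).PosDef :=
    Matrix.PosDef.posSemidef_add hCpsd (Matrix.PosDef.one.smul (by positivity))
  have hAsymm : (C + σ ^ 2 • (1 : Matrix (Fin n) (Fin n) ℝ))ᵀ
      = C + σ ^ 2 • (1 : Matrix (Fin n) (Fin n) ℝ) := by
    simp [hC.eq]
  set A := C + σ ^ 2 • (1 : Matrix (Fin n) (Fin n) ℝ) with hA
  set w := A⁻¹ *ᵥ v with hw
  have hAw : A *ᵥ w = v := by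
    rw [hw, mulVec_mulVec, mul_nonsing_inv _ ((isUnit_iff_isUnit_det _).1 hApos.isUnit),
      one_mulVec]
  have hmean : ∀ y : Fin n → ℝ, v ⬝ᵥ (A⁻¹ *ᵥ y) = w ⬝ᵥ y := by
    intro y
    rw [dotProduct_mulVec, ← mulVec_transpose, transpose_nonsing_inv, hAsymm]
  have hvar : σ ^ 2 * (w ⬝ᵥ w) ≤ α - v ⬝ᵥ w := by
    have h1 := block_quadratic_nonneg hPSD w
    have h2 : w ⬝ᵥ (A *ᵥ w) = w ⬝ᵥ (C *ᵥ w) + σ ^ 2 * (w ⬝ᵥ w) := by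
      rw [hA, add_mulVec, smul_mulVec, one_mulVec, dotProduct_add, dotProduct_smul, smul_eq_mul]
    rw [hAw, dotProduct_comm w v] at h2
    linarith
  have hε : 0 ≤ ε := (abs_nonneg _).trans (hY ⟨0, hn⟩)
  have hdata : ∑ i, (Y i - Ytil i) ^ 2 ≤ n * ε ^ 2 := by
    calc ∑ i, (Y i - Ytil i) ^ 2 ≤ ∑ _i : Fin n, ε ^ 2 :=
          Finset.sum_le_sum fun i _ => sq_le_sq.2 ((hY i).trans (le_abs_self ε))
      _ = n * ε ^ 2 := by simp
  have hww : w ⬝ᵥ w = ∑ i, w i ^ 2 := by simp [dotProduct, sq]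
  have hww0 : 0 ≤ w ⬝ᵥ w := by rw [hww]; positivity
  have hCS : (w ⬝ᵥ (Y - Ytil)) ^ 2 ≤ (w ⬝ᵥ w) * (n * ε ^ 2) := by
    calc (w ⬝ᵥ (Y - Ytil)) ^ 2 ≤ (∑ i, w i ^ 2) * ∑ i, (Y i - Ytil i) ^ 2 :=
          Finset.sum_mul_sq_le_sq_mul_sq _ _ _
      _ ≤ (w ⬝ᵥ w) * (n * ε ^ 2) := by
          rw [← hww]; exact mul_le_mul_of_nonneg_left hdata hww0
  rw [hmean Y, hmean Ytil, ← dotProduct_sub]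
  apply abs_le_of_sq_le_sq _ (by positivity)
  have hs : 0 ≤ α - v ⬝ᵥ w := le_trans (by positivity) hvar
  rw [mul_pow, div_pow, mul_pow, Real.sq_sqrt hs, Real.sq_sqrt (Nat.cast_nonneg n)]
  refine hCS.trans ?_
  rw [div_mul_eq_mul_div, le_div_iff₀ (by positivity)]
  calc (w ⬝ᵥ w) * (n * ε ^ 2) * σ ^ 2 = ε ^ 2 * n * (σ ^ 2 * (w ⬝ᵥ w)) := by ring
    _ ≤ ε ^ 2 * n * (α - v ⬝ᵥ w) := mul_le_mul_of_nonneg_left hvar (by positivity)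
end

section
/- Let L ≥ 1, σ > 0, B ≥ 0, and let s_1, …, s_L be real numbers with 0 ≤ s_ℓ ≤ B for every ℓ. Define γ := (1/2) ∑_{ℓ=1}^L log(1 + σ^{−2} s_ℓ²). Then ∑_{ℓ=1}^L s_ℓ ≤ sqrt(2 (σ² + B²) L γ). -/
/-!
By Cauchy–Schwarz, `(∑ s_ℓ)² ≤ L ∑ s_ℓ²`, so it suffices to bound each `s_ℓ²` by
`(σ² + B²) log (1 + σ⁻² s_ℓ²)`. This follows from `1 - x⁻¹ ≤ log x` at `x = 1 + σ⁻² s_ℓ²`,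
where the left-hand side equals `s_ℓ² / (σ² + s_ℓ²)`, together with `s_ℓ ≤ B`.
-/

open BigOperators

/-- The termwise bound of a squared posterior deviation by its information gain. -/
lemma sq_le_mul_log_one_add {σ B t : ℝ} (hσ : 0 < σ) (ht : 0 ≤ t) (htB : t ≤ B) :
    t ^ 2 ≤ (σ ^ 2 + B ^ 2) * Real.log (1 + (σ ^ 2)⁻¹ * t ^ 2) := by
  have hlog : t ^ 2 / (σ ^ 2 + t ^ 2) ≤ Real.log (1 + (σ ^ 2)⁻¹ * t ^ 2) := by
    have h := Real.one_sub_inv_le_log_of_pos (x := 1 + (σ ^ 2)⁻¹ * t ^ 2) (by positivity)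
    have heq : 1 - (1 + (σ ^ 2)⁻¹ * t ^ 2)⁻¹ = t ^ 2 / (σ ^ 2 + t ^ 2) := by
      have h1 : σ ^ 2 + t ^ 2 ≠ 0 := by positivity
      have h2 : 1 + (σ ^ 2)⁻¹ * t ^ 2 = (σ ^ 2 + t ^ 2) / σ ^ 2 := by field_simp
      rw [h2, inv_div]
      field_simp
      ring
    rwa [heq] at h
  have hlog0 : 0 ≤ Real.log (1 + (σ ^ 2)⁻¹ * t ^ 2) := le_trans (by positivity) hlog
  calc t ^ 2 ≤ Real.log (1 + (σ ^ 2)⁻¹ * t ^ 2) * (σ ^ 2 + t ^ 2) :=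
        (div_le_iff₀ (by positivity)).1 hlog
    _ ≤ Real.log (1 + (σ ^ 2)⁻¹ * t ^ 2) * (σ ^ 2 + B ^ 2) := by gcongr
    _ = _ := mul_comm _ _

/-- The sum of posterior standard deviations is bounded via the information gain:
if `0 ≤ s_ℓ ≤ B` and `γ = (1/2) ∑ log(1 + σ⁻² s_ℓ²)`, then
`∑ s_ℓ ≤ sqrt(2 (σ² + B²) L γ)`. -/
theorem stmt3 (L : ℕ) (hL : 1 ≤ L) (σ B : ℝ) (hσ : 0 < σ) (hB : 0 ≤ B)
    (s : Fin L → ℝ) (hs : ∀ ℓ, 0 ≤ s ℓ ∧ s ℓ ≤ B) :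
    ∑ ℓ, s ℓ ≤
      Real.sqrt (2 * (σ ^ 2 + B ^ 2) * L *
        ((1 / 2) * ∑ ℓ, Real.log (1 + (σ ^ 2)⁻¹ * s ℓ ^ 2))) := by
  apply Real.le_sqrt_of_sq_le
  calc (∑ ℓ, s ℓ) ^ 2 ≤ L * ∑ ℓ, s ℓ ^ 2 := by
        simpa using sq_sum_le_card_mul_sum_sq (s := Finset.univ) (f := s)
    _ ≤ L * ∑ ℓ, (σ ^ 2 + B ^ 2) * Real.log (1 + (σ ^ 2)⁻¹ * s ℓ ^ 2) := by
        gcongr with ℓ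
        exact sq_le_mul_log_one_add hσ (hs ℓ).1 (hs ℓ).2
    _ = _ := by
        rw [← Finset.mul_sum]
        ring
end

section
/- Let m ≥ 2 be an integer and let s > m − 1/2 be real. Then for every γ with 0 < γ < min{(2s − 2m + 1)/(m + 3), 1} there exists a constant C > 0 such that for every d ∈ (0, 1), ∑_{i=1}^∞ i^{−2s/m} · min{ i^{(m−1)/m}, i^{(2m+2)/m} d² } ≤ C d^{2γ}. -/
open Real BigOperators

/-!
The proof interpolates each summand instead of splitting the sum: for `0 ≤ γ ≤ 1` and `a, b > 0`
one has `min a b ≤ a ^ (1 - γ) * b ^ γ`. Applied to the `n`-th summand this gives the bound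
`n ^ p * d ^ (2 * γ)` with `p = (-2 * s + (m - 1) + γ * (m + 3)) / m`, and the assumption
`γ < (2 * s - 2 * m + 1) / (m + 3)` says exactly that `p < -1`, so that `∑ n ^ p` converges.
-/

lemma min_le_rpow_mul_rpow {a b γ : ℝ} (ha : 0 < a) (hb : 0 < b) (h0 : 0 ≤ γ) (h1 : γ ≤ 1) :
    min a b ≤ a ^ (1 - γ) * b ^ γ := by
  have hmin : 0 < min a b := lt_min ha hb
  calc min a b = (min a b) ^ (1 - γ) * (min a b) ^ γ := by
        rw [← Real.rpow_add hmin, sub_add_cancel, Real.rpow_one]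
    _ ≤ a ^ (1 - γ) * b ^ γ := by
        gcongr
        · exact min_le_left a b
        · exact min_le_right a b

/-- Core series estimate for Hölder continuity of the Matérn manifold GP: for `m ≥ 2`,
`s > m − 1/2`, and `0 < γ < min{(2s − 2m + 1)/(m + 3), 1}`, there is `C > 0` such that
for all `d ∈ (0, 1)`,
`∑ᵢ i^(−2s/m) min{ i^((m−1)/m), i^((2m+2)/m) d² } ≤ C d^(2γ)`
(the index `i ≥ 1` is encoded as `i + 1` with `i : ℕ`). -/
theorem stmt8 (m : ℕ) (hm : 2 ≤ m) (s : ℝ) (hs : (m : ℝ) - 1 / 2 < s) :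
    ∀ γ : ℝ, 0 < γ → γ < min ((2 * s - 2 * m + 1) / (m + 3)) 1 →
      ∃ C > (0 : ℝ), ∀ d : ℝ, 0 < d → d < 1 →
        (∑' i : ℕ, ((i : ℝ) + 1) ^ (-(2 * s) / m) *
            min (((i : ℝ) + 1) ^ (((m : ℝ) - 1) / m))
              (((i : ℝ) + 1) ^ ((2 * (m : ℝ) + 2) / m) * d ^ 2))
          ≤ C * d ^ (2 * γ) := by
  intro γ hγ0 hγ
  obtain ⟨hγs, hγ1⟩ := lt_min_iff.1 hγ
  have hm0 : (0 : ℝ) < m := by exact_mod_cast (by omega : 0 < m)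
  rw [lt_div_iff₀ (by positivity)] at hγs
  set p : ℝ := (-(2 * s) + (m - 1) + γ * (m + 3)) / m with hp
  have hp1 : p < -1 := by
    rw [hp, div_lt_iff₀ hm0]
    linarith
  have hsum : Summable fun i : ℕ => ((i : ℝ) + 1) ^ p := by
    have h := (summable_nat_add_iff 1).2 (Real.summable_nat_rpow.2 hp1)
    simpa using h
  have hnonneg : 0 ≤ ∑' i : ℕ, ((i : ℝ) + 1) ^ p := tsum_nonneg fun i => by positivity
  refine ⟨(∑' i : ℕ, ((i : ℝ) + 1) ^ p) + 1, by linarith, fun d hd _ => ?_⟩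
  have hterm : ∀ i : ℕ, ((i : ℝ) + 1) ^ (-(2 * s) / m) *
      min (((i : ℝ) + 1) ^ (((m : ℝ) - 1) / m))
        (((i : ℝ) + 1) ^ ((2 * (m : ℝ) + 2) / m) * d ^ 2) ≤
      ((i : ℝ) + 1) ^ p * d ^ (2 * γ) := by
    intro i
    have hn : (0 : ℝ) < (i : ℝ) + 1 := by positivity
    set n : ℝ := (i : ℝ) + 1
    calc _ ≤ n ^ (-(2 * s) / m) * ((n ^ (((m : ℝ) - 1) / m)) ^ (1 - γ) *
          (n ^ ((2 * (m : ℝ) + 2) / m) * d ^ 2) ^ γ) := by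
          gcongr
          exact min_le_rpow_mul_rpow (by positivity) (by positivity) hγ0.le hγ1.le
      _ = n ^ p * d ^ (2 * γ) := by
          have hd2 : (d ^ 2) ^ γ = d ^ (2 * γ) := by
            rw [← Real.rpow_natCast, ← Real.rpow_mul hd.le, Nat.cast_ofNat]
          rw [Real.mul_rpow (by positivity) (by positivity), hd2, ← Real.rpow_mul hn.le,
            ← Real.rpow_mul hn.le, ← mul_assoc, ← mul_assoc, ← Real.rpow_add hn,
            ← Real.rpow_add hn]
          congr 2
          rw [hp]
          field_simp
          ring
  have hsum' := hsum.mul_right (d ^ (2 * γ))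
  have hle := (Summable.of_nonneg_of_le (fun i => by positivity) hterm hsum').tsum_le_tsum
    hterm hsum'
  rw [tsum_mul_right] at hle
  have hd0 : 0 < d ^ (2 * γ) := by positivity
  linarith
end

section
/- Let (X, d) be a metric space, let m ≥ 2 be an integer, s > m − 1/2, κ > 0, A > 0, c₁, c₂ > 0. Let (λ_i)_{i≥1} be positive reals with c₁ i^{2/m} ≤ λ_i ≤ c₂ i^{2/m}, and let ψ_i : X → ℝ satisfy sup_x |ψ_i(x)| ≤ A λ_i^{(m−1)/4} and |ψ_i(x) − ψ_i(y)| ≤ A λ_i^{(m+1)/2} d(x, y) for all x, y ∈ X and all i. Then for every γ with 0 < γ < min{(2s − 2m + 1)/(m + 3), 1} there exists a constant C > 0 such that for all x, y ∈ X with d(x, y) < 1: κ^{2s−m} ∑_{i=1}^∞ (κ² + λ_i)^{−s} (ψ_i(x) − ψ_i(y))² ≤ C d(x, y)^{2γ}. -/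
open Real

/-!
Interpolating between the sup-norm bound and the Lipschitz bound with weight `γ` gives
`|ψᵢ(x) - ψᵢ(y)|² ≤ 4 A² λᵢ^((m-1)/2 + γ(m+3)/2) d(x,y)^(2γ)`, so the `i`-th term of the series
is at most `4 A² λᵢ^(-q) d(x,y)^(2γ)` with `q = s - (m-1)/2 - γ(m+3)/2`. By the lower Weyl bound
`λᵢ^(-q) ≤ c₁^(-q) i^(-2q/m)`, and `2q/m > 1` is exactly the condition
`γ < (2s - 2m + 1)/(m + 3)`, so the series is dominated by
`d(x,y)^(2γ)` times a convergent series independent of `x` and `y`.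
-/

/-- Geometric interpolation between two upper bounds on the same quantity. -/
lemma le_rpow_mul_rpow_of_le {T P Q γ : ℝ} (hT : 0 ≤ T) (hP : T ≤ P) (hQ : T ≤ Q)
    (h0 : 0 ≤ γ) (h1 : γ ≤ 1) : T ≤ P ^ (1 - γ) * Q ^ γ := by
  calc T = T ^ (1 - γ) * T ^ γ := by
        rw [← rpow_add_of_nonneg hT (by linarith) h0]; simp
    _ ≤ P ^ (1 - γ) * Q ^ γ := by
        have := hT.trans hP
        gcongr

/-- The interpolated bound, squared: `T` stands for `|ψᵢ(x) - ψᵢ(y)|`, `L` for `λᵢ` and `d` for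
the distance. -/
lemma sq_le_interp {T A L d a b γ : ℝ} (hA : 0 < A) (hL : 0 < L) (hd : 0 ≤ d) (hT : 0 ≤ T)
    (hP : T ≤ 2 * A * L ^ a) (hQ : T ≤ A * L ^ b * d) (h0 : 0 ≤ γ) (h1 : γ ≤ 1) :
    T ^ 2 ≤ 4 * A ^ 2 * L ^ (2 * (a * (1 - γ) + b * γ)) * d ^ (2 * γ) := by
  have hQ' : T ≤ 2 * A * L ^ b * d := by
    have : 0 ≤ A * L ^ b * d := by positivity
    linarith
  have h := le_rpow_mul_rpow_of_le hT hP hQ' h0 h1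
  have hprod : (2 * A * L ^ a) ^ (1 - γ) * (2 * A * L ^ b * d) ^ γ
      = 2 * A * L ^ (a * (1 - γ) + b * γ) * d ^ γ := by
    rw [mul_rpow (by positivity) (by positivity), mul_rpow (by positivity) hd,
      mul_rpow (x := 2 * A) (y := L ^ b) (by positivity) (by positivity), ← rpow_mul hL.le,
      ← rpow_mul hL.le, rpow_add hL]
    have h2 : (2 * A) ^ (1 - γ) * (2 * A) ^ γ = 2 * A := by
      rw [← rpow_add (by positivity)]; simp
    calc _ = ((2 * A) ^ (1 - γ) * (2 * A) ^ γ) * (L ^ (a * (1 - γ)) * L ^ (b * γ)) * d ^ γ := by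
          ring
      _ = _ := by rw [h2]
  rw [hprod] at h
  calc T ^ 2 ≤ (2 * A * L ^ (a * (1 - γ) + b * γ) * d ^ γ) ^ 2 := by gcongr
    _ = _ := by
      rw [mul_comm 2 (a * (1 - γ) + b * γ), mul_comm 2 γ, rpow_mul hL.le, rpow_mul hd,
        rpow_two, rpow_two]
      ring

/-- Local Hölder moment estimate for the Matérn manifold GP: under Weyl-type eigenvalue
bounds and the eigenfunction sup-norm and Lipschitz bounds, for every
`0 < γ < min{(2s − 2m + 1)/(m + 3), 1}` there is `C > 0` such that whenever `d(x,y) < 1`,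
`κ^(2s−m) ∑ᵢ (κ² + λᵢ)^(−s) (ψᵢ(x) − ψᵢ(y))² ≤ C d(x,y)^(2γ)`
(the index `i ≥ 1` is encoded as `i + 1` with `i : ℕ`). -/
theorem stmt9 {X : Type*} [MetricSpace X] (m : ℕ) (hm : 2 ≤ m)
    (s κ A c₁ c₂ : ℝ) (hs : (m : ℝ) - 1 / 2 < s) (hκ : 0 < κ) (hA : 0 < A)
    (hc₁ : 0 < c₁) (hc₂ : 0 < c₂)
    (lam : ℕ → ℝ) (hpos : ∀ i, 0 < lam i)
    (hlow : ∀ i : ℕ, c₁ * ((i : ℝ) + 1) ^ ((2 : ℝ) / m) ≤ lam i)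
    (hup : ∀ i : ℕ, lam i ≤ c₂ * ((i : ℝ) + 1) ^ ((2 : ℝ) / m))
    (ψ : ℕ → X → ℝ)
    (hψ : ∀ i x, |ψ i x| ≤ A * lam i ^ (((m : ℝ) - 1) / 4))
    (hψ' : ∀ i x y, |ψ i x - ψ i y| ≤ A * lam i ^ (((m : ℝ) + 1) / 2) * dist x y) :
    ∀ γ : ℝ, 0 < γ → γ < min ((2 * s - 2 * m + 1) / (m + 3)) 1 →
      ∃ C > (0 : ℝ), ∀ x y : X, dist x y < 1 →
        κ ^ (2 * s - (m : ℝ)) *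
            (∑' i, (κ ^ 2 + lam i) ^ (-s) * (ψ i x - ψ i y) ^ 2)
          ≤ C * dist x y ^ (2 * γ) := by
  intro γ hγ0 hγ
  obtain ⟨hγs, hγ1⟩ := lt_min_iff.mp hγ
  have hm' : (2 : ℝ) ≤ m := by exact_mod_cast hm
  have hm0 : (0 : ℝ) < m := by linarith
  have hs0 : 0 < s := by linarith
  rw [lt_div_iff₀ (by linarith)] at hγs
  set q : ℝ := s - 2 * (((m : ℝ) - 1) / 4 * (1 - γ) + ((m : ℝ) + 1) / 2 * γ) with hq
  have hqm : (m : ℝ) / 2 < q := by rw [hq]; nlinarith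
  have hq0 : 0 < q := by linarith
  have hp : 1 < 2 / (m : ℝ) * q := by
    rw [div_mul_eq_mul_div, lt_div_iff₀ hm0]; linarith
  have hsum : Summable fun i : ℕ => ((i : ℝ) + 1) ^ (-(2 / (m : ℝ) * q)) := by
    have h := (summable_nat_add_iff 1).mpr
      (Real.summable_nat_rpow (p := -(2 / (m : ℝ) * q)) |>.mpr (by linarith))
    simpa using h
  set K : ℝ := 4 * A ^ 2 * c₁ ^ (-q) with hK
  have hK0 : 0 < K := by positivity
  set S : ℝ := ∑' i : ℕ, ((i : ℝ) + 1) ^ (-(2 / (m : ℝ) * q)) with hS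
  have hS0 : 0 ≤ S := tsum_nonneg fun i => by positivity
  have hκs : 0 < κ ^ (2 * s - (m : ℝ)) := rpow_pos_of_pos hκ _
  -- The summand `1` only serves to make the constant strictly positive.
  refine ⟨κ ^ (2 * s - (m : ℝ)) * (K * (S + 1)), by positivity, fun x y _ => ?_⟩
  have hd : 0 ≤ dist x y := dist_nonneg
  have hterm : ∀ i, (κ ^ 2 + lam i) ^ (-s) * (ψ i x - ψ i y) ^ 2
      ≤ K * dist x y ^ (2 * γ) * ((i : ℝ) + 1) ^ (-(2 / (m : ℝ) * q)) := by
    intro i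
    have hL := hpos i
    have hP : |ψ i x - ψ i y| ≤ 2 * A * lam i ^ (((m : ℝ) - 1) / 4) := by
      have h1 := hψ i x
      have h2 := hψ i y
      have h3 := abs_sub (ψ i x) (ψ i y)
      linarith
    have h1 := sq_le_interp hA hL hd (abs_nonneg _) hP (hψ' i x y) hγ0.le hγ1.le
    rw [sq_abs] at h1
    have h2 : (κ ^ 2 + lam i) ^ (-s) ≤ lam i ^ (-s) :=
      rpow_le_rpow_of_nonpos hL (by nlinarith) (by linarith)
    have h3 : lam i ^ (-q) ≤ c₁ ^ (-q) * ((i : ℝ) + 1) ^ (-(2 / (m : ℝ) * q)) := by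
      calc lam i ^ (-q) ≤ (c₁ * ((i : ℝ) + 1) ^ ((2 : ℝ) / m)) ^ (-q) :=
            rpow_le_rpow_of_nonpos (by positivity) (hlow i) (by linarith)
        _ = _ := by
            rw [mul_rpow hc₁.le (by positivity), ← rpow_mul (by positivity), mul_neg]
    calc (κ ^ 2 + lam i) ^ (-s) * (ψ i x - ψ i y) ^ 2
        ≤ lam i ^ (-s) * (4 * A ^ 2
            * lam i ^ (2 * (((m : ℝ) - 1) / 4 * (1 - γ) + ((m : ℝ) + 1) / 2 * γ))
            * dist x y ^ (2 * γ)) := by gcongr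
      _ = 4 * A ^ 2 * dist x y ^ (2 * γ) * lam i ^ (-q) := by
          have : -q = -s + 2 * (((m : ℝ) - 1) / 4 * (1 - γ) + ((m : ℝ) + 1) / 2 * γ) := by
            rw [hq]; ring
          rw [this, rpow_add hL]; ring
      _ ≤ 4 * A ^ 2 * dist x y ^ (2 * γ)
            * (c₁ ^ (-q) * ((i : ℝ) + 1) ^ (-(2 / (m : ℝ) * q))) := by gcongr
      _ = _ := by rw [hK]; ring
  have hmaj := hsum.mul_left (K * dist x y ^ (2 * γ))
  have hnn : ∀ i, 0 ≤ (κ ^ 2 + lam i) ^ (-s) * (ψ i x - ψ i y) ^ 2 := fun i => by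
    have := hpos i
    positivity
  have htsum := (Summable.of_nonneg_of_le hnn hterm hmaj).tsum_le_tsum hterm hmaj
  rw [tsum_mul_left, ← hS] at htsum
  have hD : 0 ≤ K * dist x y ^ (2 * γ) := by positivity
  calc _ ≤ κ ^ (2 * s - (m : ℝ)) * (K * dist x y ^ (2 * γ) * (S + 1)) := by
        gcongr
        linarith
    _ = _ := by ring
end

section
/- Let L ≥ 1, σ > 0, and let K ∈ ℝ^{L×L} be symmetric positive semi-definite. For ℓ = 1, …, L let K_{<ℓ} ∈ ℝ^{(ℓ−1)×(ℓ−1)} denote the leading principal submatrix of K, let k_ℓ ∈ ℝ^{ℓ−1} be the vector with entries (K)_{iℓ} for i < ℓ, and define s_ℓ² := K_{ℓℓ} − k_ℓ^⊤ (K_{<ℓ} + σ² I)^{−1} k_ℓ. Then det(σ² I + K) = ∏_{ℓ=1}^L (σ² + s_ℓ²); equivalently, (1/2) log det(I + σ^{−2} K) = (1/2) ∑_{ℓ=1}^L log(1 + σ^{−2} s_ℓ²). -/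
/-!
Order the points and peel off the last one: `σ²I + K` is a block matrix whose upper-left block is
`σ²I + K_{<L}`, positive definite and hence invertible. The Schur complement of that block is the
scalar `σ² + s_L²`, so the determinant factors as `det (σ²I + K_{<L}) * (σ² + s_L²)`
(`det_smul_one_add_succ`). The product formula follows by induction on `L`, since the quantities
`s_ℓ²` with `ℓ < L` only involve the leading principal submatrix `K_{<L}`.
-/

open Matrix BigOperators

/-- Schur complement step: splitting off the last index of `c I + K`. -/
theorem det_smul_one_add_succ (n : ℕ) (c : ℝ) (hc : 0 < c)
    (K : Matrix (Fin (n + 1)) (Fin (n + 1)) ℝ) (hK : K.PosSemidef) :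
    (c • (1 : Matrix (Fin (n + 1)) (Fin (n + 1)) ℝ) + K).det =
      (c • (1 : Matrix (Fin n) (Fin n) ℝ) + K.submatrix Fin.castSucc Fin.castSucc).det *
        (c + (K (Fin.last n) (Fin.last n) -
          (fun i : Fin n => K i.castSucc (Fin.last n)) ⬝ᵥ
            ((K.submatrix Fin.castSucc Fin.castSucc + c • (1 : Matrix (Fin n) (Fin n) ℝ))⁻¹ *ᵥ
              fun i : Fin n => K i.castSucc (Fin.last n)))) := by
  set A : Matrix (Fin n) (Fin n) ℝ :=
    K.submatrix Fin.castSucc Fin.castSucc + c • (1 : Matrix (Fin n) (Fin n) ℝ) with hA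
  set k : Fin n → ℝ := fun i => K i.castSucc (Fin.last n) with hk
  have hApos : A.PosDef :=
    Matrix.PosDef.posSemidef_add (hK.submatrix Fin.castSucc) (Matrix.PosDef.one.smul hc)
  let _ : Invertible A := hApos.isUnit.invertible
  have hsymm : ∀ i j, K i j = K j i := fun i j => by
    simpa using (hK.isHermitian.apply i j).symm
  have hblock : (c • (1 : Matrix (Fin (n + 1)) (Fin (n + 1)) ℝ) + K).submatrix
      (finSumFinEquiv : Fin n ⊕ Fin 1 ≃ Fin (n + 1)) finSumFinEquiv =
      Matrix.fromBlocks A (Matrix.replicateCol (Fin 1) k) (Matrix.replicateRow (Fin 1) k)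
        (Matrix.of fun _ _ => c + K (Fin.last n) (Fin.last n)) := by
    have hcast : ∀ i : Fin n, Fin.castAdd 1 i = i.castSucc := fun _ => rfl
    have hlast : ∀ i : Fin 1, Fin.natAdd n i = Fin.last n := fun i => by
      ext; simp
    ext (i | i) (j | j)
    · simp [hA, hcast, Matrix.one_apply, add_comm]
    · simp [hk, hcast, hlast, (Fin.castSucc_lt_last i).ne]
    · simp [hk, hcast, hlast, (Fin.castSucc_lt_last j).ne', hsymm (Fin.last n)]
    · simp [hlast]
  rw [← Matrix.det_submatrix_equiv_self (finSumFinEquiv : Fin n ⊕ Fin 1 ≃ Fin (n + 1)), hblock,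
    Matrix.det_fromBlocks₁₁, add_comm (c • (1 : Matrix (Fin n) (Fin n) ℝ)), ← hA,
    Matrix.invOf_eq_nonsing_inv, Matrix.det_fin_one]
  congr 1
  rw [Matrix.mul_assoc, Matrix.sub_apply, Matrix.of_apply, add_sub_assoc]
  rfl

/-- Sequential-conditioning determinant identity: for a PSD kernel matrix `K` and `σ > 0`,
`det(σ²I + K) = ∏_ℓ (σ² + s_ℓ²)`, where `s_ℓ²` is the posterior variance at the `ℓ`-th
point given the first `ℓ − 1` noisy observations, i.e.
`s_ℓ² = K_{ℓℓ} − k_ℓᵀ (K_{<ℓ} + σ²I)⁻¹ k_ℓ`. -/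
theorem stmt11 (L : ℕ) (hL : 1 ≤ L) (σ : ℝ) (hσ : 0 < σ)
    (K : Matrix (Fin L) (Fin L) ℝ) (hK : K.PosSemidef) :
    (σ ^ 2 • (1 : Matrix (Fin L) (Fin L) ℝ) + K).det =
      ∏ ℓ : Fin L,
        (σ ^ 2 +
          (K ℓ ℓ -
            (fun i : Fin ℓ.val => K (Fin.castLE ℓ.isLt.le i) ℓ) ⬝ᵥ
              ((K.submatrix (Fin.castLE ℓ.isLt.le) (Fin.castLE ℓ.isLt.le) +
                  σ ^ 2 • (1 : Matrix (Fin ℓ.val) (Fin ℓ.val) ℝ))⁻¹ *ᵥ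
                fun i : Fin ℓ.val => K (Fin.castLE ℓ.isLt.le i) ℓ))) := by
  clear hL
  induction L with
  | zero => simp
  | succ n ih =>
    rw [det_smul_one_add_succ n (σ ^ 2) (by positivity) K hK, ih _ (hK.submatrix Fin.castSucc),
      Fin.prod_univ_castSucc]
    rfl
end

section
/- Let L ≥ 1, σ > 0, B > 0, and let K ∈ ℝ^{L×L} be symmetric positive semi-definite with rank(K) ≤ D for some integer 1 ≤ D ≤ L and with every diagonal entry K_{ℓℓ} ≤ B². Then log det(I + σ^{−2} K) ≤ D · log(1 + L B² / (σ² D)). -/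
open Matrix

/-!
Let `λ i ≥ 0` be the eigenvalues of `K` and `c = σ⁻²`. Then `log det (1 + c K)` is the sum of
`log (1 + c λ i)` over the at most `D` nonzero eigenvalues, while `∑ λ i = tr K ≤ L B²`. Each
logarithm is bounded by its tangent line at `M = 1 + c L B² / D`, the value at which all terms of
the extremal configuration coincide (`sum_log_one_add_le`). Because `log M + 1/M - 1 ≥ 0`,
having fewer than `D` nonzero eigenvalues can only decrease the resulting bound.
-/

lemma det_one_add_smul_eq_prod {n : Type*} [Fintype n] [DecidableEq n] {K : Matrix n n ℝ}
    (hK : K.IsHermitian) {c : ℝ} (hc : c ≠ 0) :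
    (1 + c • K).det = ∏ i, (1 + c * hK.eigenvalues i) := by
  -- `1 + c K = -c (-c⁻¹ - K)`, so the determinant is a value of the characteristic polynomial.
  have h1 : 1 + c • K = (-c) • (Matrix.scalar n (-c⁻¹) - K) := by
    ext i j
    by_cases hij : i = j
    · subst hij
      simp
      field_simp
      ring
    · simp [hij]
  rw [h1, Matrix.det_smul, ← Matrix.eval_charpoly, hK.charpoly_eq, Polynomial.eval_prod,
    ← Finset.card_univ, ← Finset.prod_const, ← Finset.prod_mul_distrib]
  refine Finset.prod_congr rfl fun i _ => ?_
  simp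
  field_simp
  ring

/-- Jensen's inequality for `log (1 + x)` with a support of size at most `D`, where the number of
nonzero terms need not equal `D` and the total `S` is only an upper bound. -/
lemma sum_log_one_add_le {ι : Type*} (s : Finset ι) (x : ι → ℝ) (hx : ∀ i ∈ s, 0 ≤ x i)
    {D : ℕ} (hD : 1 ≤ D) (hs : s.card ≤ D) {S : ℝ} (hS : ∑ i ∈ s, x i ≤ S) :
    ∑ i ∈ s, Real.log (1 + x i) ≤ D * Real.log (1 + S / D) := by
  have hDpos : (0 : ℝ) < D := by exact_mod_cast hD
  have hS0 : 0 ≤ S := (Finset.sum_nonneg hx).trans hS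
  set M := 1 + S / D with hM
  have hMpos : 0 < M := by positivity
  have hDM : D * M = D + S := by rw [hM]; field_simp
  have tangent : ∀ i ∈ s, Real.log (1 + x i) ≤ (Real.log M + M⁻¹ - 1) + x i * M⁻¹ := by
    intro i hi
    have hpos : 0 < 1 + x i := by linarith [hx i hi]
    have h := Real.log_le_sub_one_of_pos (mul_pos hpos (inv_pos.2 hMpos))
    rw [Real.log_mul hpos.ne' (inv_pos.2 hMpos).ne', Real.log_inv] at h
    linarith
  have hslack : 0 ≤ Real.log M + M⁻¹ - 1 := by
    have h := Real.one_sub_inv_le_log_of_pos hMpos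
    linarith
  have hcard : (s.card : ℝ) ≤ D := by exact_mod_cast hs
  calc ∑ i ∈ s, Real.log (1 + x i)
      ≤ ∑ i ∈ s, ((Real.log M + M⁻¹ - 1) + x i * M⁻¹) := Finset.sum_le_sum tangent
    _ = s.card * (Real.log M + M⁻¹ - 1) + (∑ i ∈ s, x i) * M⁻¹ := by
        rw [Finset.sum_add_distrib, Finset.sum_const, nsmul_eq_mul, Finset.sum_mul]
    _ ≤ D * (Real.log M + M⁻¹ - 1) + S * M⁻¹ := by gcongr
    _ = D * Real.log M + ((D + S) * M⁻¹ - D) := by ring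
    _ = D * Real.log M := by
        rw [← hDM, mul_assoc, mul_inv_cancel₀ hMpos.ne']
        ring

/-- Log-determinant information-gain bound for a low-rank PSD kernel matrix:
if `K` is PSD with rank at most `D` and diagonal entries at most `B²`, then
`log det(I + σ⁻² K) ≤ D log(1 + L B² / (σ² D))`. -/
theorem stmt12 (L D : ℕ) (hD1 : 1 ≤ D) (hDL : D ≤ L) (σ B : ℝ) (hσ : 0 < σ) (hB : 0 < B)
    (K : Matrix (Fin L) (Fin L) ℝ) (hK : K.PosSemidef) (hrank : K.rank ≤ D)
    (hdiag : ∀ ℓ, K ℓ ℓ ≤ B ^ 2) :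
    Real.log ((1 + (σ ^ 2)⁻¹ • K).det) ≤
      (D : ℝ) * Real.log (1 + (L : ℝ) * B ^ 2 / (σ ^ 2 * D)) := by
  have hc : 0 < (σ ^ 2)⁻¹ := by positivity
  set ev := hK.isHermitian.eigenvalues with hev
  have hev0 : ∀ i, 0 ≤ ev i := hK.eigenvalues_nonneg
  set s : Finset (Fin L) := Finset.univ.filter fun i => ev i ≠ 0 with hs
  have hzero : ∀ i, i ∉ s → ev i = 0 := by
    intro i hi
    simpa [hs] using hi
  have hcard : s.card ≤ D := by
    rwa [hK.isHermitian.rank_eq_card_non_zero_eigs, Fintype.card_subtype] at hrank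
  have htrace : ∑ i ∈ s, ev i ≤ L * B ^ 2 := by
    have h : K.trace = ∑ i, ev i := by
      simpa using hK.isHermitian.trace_eq_sum_eigenvalues
    rw [Finset.sum_subset (Finset.subset_univ s) fun i _ hi => hzero i hi, ← h]
    calc K.trace ≤ ∑ _i : Fin L, B ^ 2 := Finset.sum_le_sum fun i _ => hdiag i
      _ = L * B ^ 2 := by simp
  have hsum : ∑ i ∈ s, (σ ^ 2)⁻¹ * ev i ≤ (σ ^ 2)⁻¹ * (L * B ^ 2) := by
    rw [← Finset.mul_sum]
    gcongr
  rw [det_one_add_smul_eq_prod hK.isHermitian hc.ne', Real.log_prod (fun i _ => by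
      have h := mul_nonneg hc.le (hev0 i)
      positivity),
    ← Finset.sum_subset (Finset.subset_univ s) fun i _ hi => by
      rw [← hev, hzero i hi]
      simp]
  have h := sum_log_one_add_le s (fun i => (σ ^ 2)⁻¹ * ev i)
    (fun i _ => mul_nonneg hc.le (hev0 i)) hD1 hcard hsum
  have hS : (σ ^ 2)⁻¹ * (L * B ^ 2) / D = L * B ^ 2 / (σ ^ 2 * D) := by
    rw [inv_mul_eq_div, div_div]
  rwa [hS] at h
end

section
/- Let Z be a nonempty finite set, L ≥ 1, ε ≥ 0, and let f, u : Z → ℝ satisfy |u(z) − f(z)| ≤ ε for every z ∈ Z. For every ℓ ∈ {1, …, L} let μ_{ℓ−1} : Z → ℝ, let σ_{ℓ−1} : Z → [0, ∞), and let β_ℓ ≥ 0. Assume that (i) |u(z) − μ_{ℓ−1}(z)| ≤ β_ℓ σ_{ℓ−1}(z) for every z ∈ Z and every ℓ, and (ii) z_ℓ is a maximizer of z ↦ μ_{ℓ−1}(z) + β_ℓ σ_{ℓ−1}(z) over Z. Let z* be a maximizer of f over Z. Then ∑_{ℓ=1}^L ( f(z*) − f(z_ℓ) ) ≤ 2 ε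 L + 2 ∑_{ℓ=1}^L β_ℓ σ_{ℓ−1}(z_ℓ). -/
open BigOperators

/-- Deterministic core of the misspecified UCB regret analysis: if the surrogate `u` is
within `ε` of the objective `f`, lies in the confidence bands
`|u(z) − μ_{ℓ−1}(z)| ≤ β_ℓ σ_{ℓ−1}(z)`, and each query point `z_ℓ` maximizes the
acquisition function `μ_{ℓ−1} + β_ℓ σ_{ℓ−1}`, then the cumulative regret satisfies
`∑_ℓ (f(z*) − f(z_ℓ)) ≤ 2εL + 2 ∑_ℓ β_ℓ σ_{ℓ−1}(z_ℓ)`. -/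
theorem stmt13 {Z : Type*} [Fintype Z] [Nonempty Z] (L : ℕ) (hL : 1 ≤ L)
    (ε : ℝ) (hε : 0 ≤ ε) (f u : Z → ℝ) (hfu : ∀ z, |u z - f z| ≤ ε)
    (μ : Fin L → Z → ℝ) (σ' : Fin L → Z → ℝ) (hσ' : ∀ ℓ z, 0 ≤ σ' ℓ z)
    (β : Fin L → ℝ) (hβ : ∀ ℓ, 0 ≤ β ℓ)
    (hconf : ∀ ℓ z, |u z - μ ℓ z| ≤ β ℓ * σ' ℓ z)
    (z : Fin L → Z)
    (hacq : ∀ ℓ w, μ ℓ w + β ℓ * σ' ℓ w ≤ μ ℓ (z ℓ) + β ℓ * σ' ℓ (z ℓ))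
    (zstar : Z) (hstar : ∀ w, f w ≤ f zstar) :
    ∑ ℓ, (f zstar - f (z ℓ)) ≤ 2 * ε * L + 2 * ∑ ℓ, β ℓ * σ' ℓ (z ℓ) := by
  -- Instantaneous regret: `f z* ≤ u z* + ε`, then `u z*` is at most the acquisition value at
  -- `z*`, hence at `z ℓ`, which exceeds `u (z ℓ) ≤ f (z ℓ) + ε` by at most `2 β σ`.
  have step : ∀ ℓ, f zstar - f (z ℓ) ≤ 2 * ε + 2 * (β ℓ * σ' ℓ (z ℓ)) := by
    intro ℓ
    have h1 := (abs_le.mp (hfu zstar)).1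
    have h2 := (abs_le.mp (hfu (z ℓ))).2
    have h3 := (abs_le.mp (hconf ℓ zstar)).2
    have h4 := (abs_le.mp (hconf ℓ (z ℓ))).1
    have h5 := hacq ℓ zstar
    linarith
  calc ∑ ℓ, (f zstar - f (z ℓ)) ≤ ∑ ℓ, (2 * ε + 2 * (β ℓ * σ' ℓ (z ℓ))) :=
        Finset.sum_le_sum fun ℓ _ => step ℓ
    _ = 2 * ε * L + 2 * ∑ ℓ, β ℓ * σ' ℓ (z ℓ) := by
        rw [Finset.sum_add_distrib, Finset.mul_sum, Finset.sum_const, Finset.card_univ,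
          Fintype.card_fin, nsmul_eq_mul, mul_comm (L : ℝ)]
end

section
/- Let Z be a nonempty finite set, L ≥ 1, σ > 0, B > 0, ε ≥ 0, and let f, u : Z → ℝ satisfy |u(z) − f(z)| ≤ ε for every z ∈ Z. For each ℓ ∈ {1, …, L} let μ_{ℓ−1} : Z → ℝ, σ_{ℓ−1} : Z → [0, B], and let 0 ≤ β_1 ≤ β_2 ≤ … ≤ β_L. Assume that (i) |u(z) − μ_{ℓ−1}(z)| ≤ β_ℓ σ_{ℓ−1}(z) for every z ∈ Z and every ℓ, and (ii) z_ℓ maximizes z ↦ μ_{ℓ−1}(z) + β_ℓ σ_{ℓ−1}(z) over Z. Let z* maximize f over Z and define γ_L := (1/2) ∑_{ℓ=1}^L log(1 + σ^{−2} σ_{ℓ−1}(z_ℓ)²). Then the simple regret satisfies f(z*) − max_{1 ≤ ℓ ≤ L} f(z_ℓ) ≤ 2 ε + (2 β_L / L) · sqrt( 2 (σ² + B²) L γ_L ). -/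
/-!
Since `z ℓ` maximizes the upper confidence bound, the regret at step `ℓ` is at most twice the
misspecification `ε` plus twice the confidence width `β ℓ * σ' ℓ (z ℓ)`, and `β ℓ` is at most the
final `β`. The simple regret is at most the average of these regrets. Cauchy–Schwarz bounds
`∑ σ' ℓ (z ℓ)` by the root of `L * ∑ σ' ℓ (z ℓ) ^ 2`, and `sq_le_mul_log` turns each squared
standard deviation into an information-gain term.
-/

open BigOperators

/-- A variance is controlled by its information gain: `log y ≥ 1 - y⁻¹` at `y = 1 + s² / σ²`
gives `log y ≥ s² / (σ² + s²)`, and `s ≤ B`. -/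
lemma sq_le_mul_log {σ B s : ℝ} (hσ : 0 < σ) (hs0 : 0 ≤ s) (hsB : s ≤ B) :
    s ^ 2 ≤ (σ ^ 2 + B ^ 2) * Real.log (1 + (σ ^ 2)⁻¹ * s ^ 2) := by
  have hy : 0 < 1 + (σ ^ 2)⁻¹ * s ^ 2 := by positivity
  have hlog := Real.one_sub_inv_le_log_of_pos hy
  have heq : 1 - (1 + (σ ^ 2)⁻¹ * s ^ 2)⁻¹ = s ^ 2 / (σ ^ 2 + s ^ 2) := by
    field_simp
    ring
  rw [heq] at hlog
  have hsq : s ^ 2 ≤ B ^ 2 := by gcongr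
  calc s ^ 2 = (σ ^ 2 + s ^ 2) * (s ^ 2 / (σ ^ 2 + s ^ 2)) := by field_simp
    _ ≤ (σ ^ 2 + B ^ 2) * (s ^ 2 / (σ ^ 2 + s ^ 2)) := by gcongr
    _ ≤ _ := by gcongr

/-- Deterministic skeleton of the main GGP-UCB regret bound: under misspecification level
`ε`, confidence bands with nondecreasing widths `β_ℓ`, posterior standard deviations
bounded by `B`, and acquisition-maximizing query points `z_ℓ`, the simple regret obeys
`f(z*) − max_ℓ f(z_ℓ) ≤ 2ε + (2 β_L / L) sqrt(2 (σ² + B²) L γ_L)` with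
`γ_L = (1/2) ∑_ℓ log(1 + σ⁻² σ_{ℓ−1}(z_ℓ)²)`. -/
theorem stmt14 {Z : Type*} [Fintype Z] [Nonempty Z] (L : ℕ) (hL : 1 ≤ L)
    (σ B ε : ℝ) (hσ : 0 < σ) (hB : 0 < B) (hε : 0 ≤ ε)
    (f u : Z → ℝ) (hfu : ∀ z, |u z - f z| ≤ ε)
    (μ : Fin L → Z → ℝ) (σ' : Fin L → Z → ℝ)
    (hσ'0 : ∀ ℓ z, 0 ≤ σ' ℓ z) (hσ'B : ∀ ℓ z, σ' ℓ z ≤ B)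
    (β : Fin L → ℝ) (hβ0 : ∀ ℓ, 0 ≤ β ℓ) (hβmono : Monotone β)
    (hconf : ∀ ℓ z, |u z - μ ℓ z| ≤ β ℓ * σ' ℓ z)
    (z : Fin L → Z)
    (hacq : ∀ ℓ w, μ ℓ w + β ℓ * σ' ℓ w ≤ μ ℓ (z ℓ) + β ℓ * σ' ℓ (z ℓ))
    (zstar : Z) (hstar : ∀ w, f w ≤ f zstar) :
    f zstar -
        Finset.univ.sup' (Finset.univ_nonempty_iff.mpr ⟨⟨0, hL⟩⟩)
          (fun ℓ => f (z ℓ))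
      ≤ 2 * ε + (2 * β ⟨L - 1, by omega⟩ / L) *
          Real.sqrt (2 * (σ ^ 2 + B ^ 2) * L *
            ((1 / 2) * ∑ ℓ, Real.log (1 + (σ ^ 2)⁻¹ * σ' ℓ (z ℓ) ^ 2))) := by
  set M := Finset.univ.sup' (Finset.univ_nonempty_iff.mpr ⟨⟨0, hL⟩⟩)
    (fun ℓ => f (z ℓ)) with hM
  set b := β ⟨L - 1, by omega⟩ with hb
  have hLpos : (0 : ℝ) < L := by exact_mod_cast hL
  have hb0 : 0 ≤ b := hβ0 _
  have hstep : ∀ ℓ, f zstar - M ≤ 2 * ε + 2 * b * σ' ℓ (z ℓ) := by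
    intro ℓ
    have hMℓ : f (z ℓ) ≤ M :=
      Finset.le_sup' (fun ℓ => f (z ℓ)) (Finset.mem_univ ℓ)
    have hβb : β ℓ ≤ b := hβmono (Fin.le_def.mpr (Nat.le_sub_one_of_lt ℓ.isLt))
    have hwidth := mul_le_mul_of_nonneg_right hβb (hσ'0 ℓ (z ℓ))
    have h1 := abs_le.mp (hfu zstar)
    have h2 := abs_le.mp (hfu (z ℓ))
    have h3 := abs_le.mp (hconf ℓ zstar)
    have h4 := abs_le.mp (hconf ℓ (z ℓ))
    have h5 := hacq ℓ zstar
    linarith [h1.1, h2.2, h3.2, h4.1]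
  have hsum : L * (f zstar - M) ≤ L * (2 * ε) + 2 * b * ∑ ℓ, σ' ℓ (z ℓ) := by
    have h := Finset.sum_le_sum fun ℓ (_ : ℓ ∈ (Finset.univ : Finset (Fin L))) => hstep ℓ
    simp [Finset.sum_add_distrib, ← Finset.mul_sum] at h
    linarith
  have hsqrt : ∑ ℓ, σ' ℓ (z ℓ) ≤ Real.sqrt (2 * (σ ^ 2 + B ^ 2) * L *
      ((1 / 2) * ∑ ℓ, Real.log (1 + (σ ^ 2)⁻¹ * σ' ℓ (z ℓ) ^ 2))) := by
    apply Real.le_sqrt_of_sq_le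
    have hcs : (∑ ℓ, σ' ℓ (z ℓ)) ^ 2 ≤ L * ∑ ℓ, σ' ℓ (z ℓ) ^ 2 := by
      simpa using sq_sum_le_card_mul_sum_sq (s := (Finset.univ : Finset (Fin L)))
        (f := fun ℓ => σ' ℓ (z ℓ))
    have hgain : ∑ ℓ, σ' ℓ (z ℓ) ^ 2 ≤
        (σ ^ 2 + B ^ 2) * ∑ ℓ, Real.log (1 + (σ ^ 2)⁻¹ * σ' ℓ (z ℓ) ^ 2) := by
      rw [Finset.mul_sum]
      exact Finset.sum_le_sum fun ℓ _ => sq_le_mul_log hσ (hσ'0 ℓ _) (hσ'B ℓ _)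
    linarith [mul_le_mul_of_nonneg_left hgain hLpos.le]
  have hfinal := hsum.trans
    (add_le_add_right (mul_le_mul_of_nonneg_left hsqrt (by positivity : 0 ≤ 2 * b)) _)
  refine le_of_mul_le_mul_left (hfinal.trans_eq ?_) hLpos
  field_simp
end
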